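/- arXiv:2602.06821 — 2 statements merged into one kernel-verified Lean document; each statement's English description precedes it below -/
import Mathlib

section
/- (Gagliardo–Nirenberg sup-norm interpolation in ℝ³) There is a constant C > 0 such that for every u in the Schwartz space on ℝ³ (or every u ∈ H²(ℝ³)), ‖u‖_{L^∞(ℝ³)}² ≤ C·‖∇u‖_{L²(ℝ³)}·‖∇²u‖_{L²(ℝ³)}. -/
open MeasureTheory

namespace GN

open SchwartzMap LineDeriv FourierTransform

abbrev E3 := EuclideanSpace ℝ (Fin 3)

noncomputable abbrev bas (i : Fin 3) : E3 := EuclideanSpace.single i (1 : ℝ)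

/-- Pointwise first-order bound on the Fourier side. -/
lemma fourier_bound (f : SchwartzMap E3 ℂ) (ξ : E3) :
    ‖ξ‖ ^ 2 * ‖𝓕 f ξ‖ ^ 2 ≤ ∑ i, ‖𝓕 (∂_{bas i} f) ξ‖ ^ 2 := by
  have h : ∀ i, ‖𝓕 (∂_{bas i} f) ξ‖ ^ 2 = (2 * Real.pi) ^ 2 * ((ξ i) ^ 2 * ‖𝓕 f ξ‖ ^ 2) := by
    intro i
    have ht : (fun y : E3 => inner ℝ y (bas i)).HasTemperateGrowth := by fun_prop
    rw [fourier_lineDerivOp_eq, _root_.smul_apply, smulLeftCLM_apply_apply ht]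
    have hi : inner ℝ ξ (bas i) = ξ i := by
      simp [bas, EuclideanSpace.inner_single_right]
    rw [hi, norm_smul, norm_smul]
    simp only [norm_mul, Complex.norm_I, Complex.norm_real, Real.norm_eq_abs, Complex.norm_ofNat,
      mul_one, mul_pow, sq_abs]
  simp_rw [h]
  rw [EuclideanSpace.norm_sq_eq, ← Finset.mul_sum, ← Finset.sum_mul]
  simp only [Real.norm_eq_abs, sq_abs]
  have : (1 : ℝ) ≤ (2 * Real.pi) ^ 2 := by nlinarith [Real.pi_gt_three]
  exact le_mul_of_one_le_left (by positivity) this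

lemma fourier_bound2 (f : SchwartzMap E3 ℂ) (ξ : E3) :
    ‖ξ‖ ^ 4 * ‖𝓕 f ξ‖ ^ 2 ≤ ∑ i, ∑ j, ‖𝓕 (∂_{bas j} (∂_{bas i} f)) ξ‖ ^ 2 := by
  calc ‖ξ‖ ^ 4 * ‖𝓕 f ξ‖ ^ 2 = ‖ξ‖ ^ 2 * (‖ξ‖ ^ 2 * ‖𝓕 f ξ‖ ^ 2) := by ring
    _ ≤ ‖ξ‖ ^ 2 * ∑ i, ‖𝓕 (∂_{bas i} f) ξ‖ ^ 2 := by gcongr; exact fourier_bound f ξ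
    _ = ∑ i, ‖ξ‖ ^ 2 * ‖𝓕 (∂_{bas i} f) ξ‖ ^ 2 := Finset.mul_sum _ _ _
    _ ≤ _ := Finset.sum_le_sum fun i _ => fourier_bound _ ξ

lemma integrable_sq {F : Type*} [NormedAddCommGroup F] [NormedSpace ℝ F]
    (f : SchwartzMap E3 F) : Integrable (fun x => ‖f x‖ ^ 2) :=
  (f.memLp 2 volume).integrable_norm_pow (by norm_num)

lemma eLpNorm_sq {F : Type*} [NormedAddCommGroup F] [NormedSpace ℝ F]
    (f : SchwartzMap E3 F) :
    ∫ x, ‖f x‖ ^ 2 = (eLpNorm (fun y => ‖f y‖) 2 volume).toReal ^ 2 := by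
  rw [eLpNorm_norm, (f.memLp 2 volume).eLpNorm_eq_integral_rpow_norm (by norm_num) (by norm_num)]
  have h0 : 0 ≤ ∫ x, ‖f x‖ ^ 2 := integral_nonneg fun x => by positivity
  rw [ENNReal.toReal_ofReal (by positivity)]
  simp only [ENNReal.toReal_ofNat, Real.rpow_ofNat]
  rw [← Real.rpow_natCast, ← Real.rpow_mul h0]
  norm_num

/-- The radial integral. -/
lemma radial : ∃ c : ℝ, 0 < c ∧ ∀ R : ℝ, 0 < R →
    Integrable (fun ξ : E3 => (‖ξ‖ ^ 2 * (R ^ 2 + ‖ξ‖ ^ 2))⁻¹) ∧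
    ∫ ξ : E3, (‖ξ‖ ^ 2 * (R ^ 2 + ‖ξ‖ ^ 2))⁻¹ ≤ c / R := by
  have hpos : 0 < (volume : Measure E3).real (Metric.ball 0 1) :=
    ENNReal.toReal_pos (Metric.measure_ball_pos _ _ one_pos).ne' measure_ball_lt_top.ne
  refine ⟨3 * ((volume : Measure E3).real (Metric.ball 0 1) * (Real.pi / 2)), by positivity, ?_⟩
  intro R hR
  have key : ∀ y ∈ Set.Ioi (0 : ℝ), y ^ (Module.finrank ℝ E3 - 1) • (y ^ 2 * (R ^ 2 + y ^ 2))⁻¹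
      = (R ^ 2)⁻¹ * (1 + (R⁻¹ * y) ^ 2)⁻¹ := by
    intro y hy
    have hy : 0 < y := hy
    have : Module.finrank ℝ E3 - 1 = 2 := by simp
    rw [this, smul_eq_mul]
    field_simp
  have hint : Integrable (fun y : ℝ => (R ^ 2)⁻¹ * (1 + (R⁻¹ * y) ^ 2)⁻¹) :=
    (integrable_inv_one_add_sq.comp_mul_left' (inv_ne_zero hR.ne')).const_mul _
  constructor
  · rw [integrable_fun_norm_addHaar (volume : Measure E3)
      (f := fun y => (y ^ 2 * (R ^ 2 + y ^ 2))⁻¹), integrableOn_congr_fun key measurableSet_Ioi]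
    exact hint.integrableOn
  · rw [integral_fun_norm_addHaar (volume : Measure E3) (fun y => (y ^ 2 * (R ^ 2 + y ^ 2))⁻¹),
      setIntegral_congr_fun measurableSet_Ioi key, integral_const_mul,
      integral_comp_mul_left_Ioi (fun y => (1 + y ^ 2)⁻¹) 0 (inv_pos.2 hR), mul_zero,
      integral_Ioi_inv_one_add_sq]
    apply le_of_eq
    simp
    field_simp

lemma inversion_bound (f : SchwartzMap E3 ℂ) (x : E3) : ‖f x‖ ≤ ∫ ξ, ‖𝓕 f ξ‖ := by
  have h : f = 𝓕⁻ (𝓕 f) := (FourierTransform.fourierInv_fourier_eq f).symm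
  calc ‖f x‖ = ‖𝓕⁻ (⇑(𝓕 f : SchwartzMap E3 ℂ)) x‖ := by rw [← fourierInv_coe, ← h]
    _ ≤ _ := by
      rw [Real.fourierInv_eq]
      refine (norm_integral_le_integral_norm _).trans ?_
      simp

lemma amgm (g p w t : ℝ) (hw : 0 < w) (ht : 0 < t) (h : w * g ^ 2 ≤ p) :
    2 * g ≤ t * p + t⁻¹ * w⁻¹ := by
  have h1 : 0 ≤ (t * w * g - 1) ^ 2 * (t * w)⁻¹ := by positivity
  have h2 : (t * w * g - 1) ^ 2 * (t * w)⁻¹ = t * (w * g ^ 2) - 2 * g + t⁻¹ * w⁻¹ := by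
    field_simp
    ring
  nlinarith [mul_le_mul_of_nonneg_left h ht.le]

lemma complex_bound (c : ℝ)
    (hc : ∀ R : ℝ, 0 < R →
      Integrable (fun ξ : E3 => (‖ξ‖ ^ 2 * (R ^ 2 + ‖ξ‖ ^ 2))⁻¹) ∧
      ∫ ξ : E3, (‖ξ‖ ^ 2 * (R ^ 2 + ‖ξ‖ ^ 2))⁻¹ ≤ c / R)
    (f : SchwartzMap E3 ℂ) (x : E3) (R t : ℝ) (hR : 0 < R) (ht : 0 < t) :
    2 * ‖f x‖ ≤ t * (R ^ 2 * (∑ i, ∫ y, ‖∂_{bas i} f y‖ ^ 2)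
      + ∑ i, ∑ j, ∫ y, ‖∂_{bas j} (∂_{bas i} f) y‖ ^ 2) + t⁻¹ * (c / R) := by
  obtain ⟨hi, hle⟩ := hc R hR
  have i1 : Integrable (fun ξ => ∑ i, ‖𝓕 (∂_{bas i} f) ξ‖ ^ 2) :=
    integrable_finsetSum _ fun i _ => integrable_sq _
  have i2 : Integrable (fun ξ => ∑ i, ∑ j, ‖𝓕 (∂_{bas j} (∂_{bas i} f)) ξ‖ ^ 2) :=
    integrable_finsetSum _ fun i _ => integrable_finsetSum _ fun j _ => integrable_sq _
  have i3 : Integrable (fun ξ => t * (R ^ 2 * ∑ i, ‖𝓕 (∂_{bas i} f) ξ‖ ^ 2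
      + ∑ i, ∑ j, ‖𝓕 (∂_{bas j} (∂_{bas i} f)) ξ‖ ^ 2)) :=
    ((i1.const_mul _).add i2).const_mul _
  have hae : ∀ᵐ ξ : E3, ξ ≠ 0 := by
    simp [ae_iff]
  have step : ∫ ξ, 2 * ‖𝓕 f ξ‖ ≤ ∫ ξ, (t * (R ^ 2 * ∑ i, ‖𝓕 (∂_{bas i} f) ξ‖ ^ 2
      + ∑ i, ∑ j, ‖𝓕 (∂_{bas j} (∂_{bas i} f)) ξ‖ ^ 2)
      + t⁻¹ * (‖ξ‖ ^ 2 * (R ^ 2 + ‖ξ‖ ^ 2))⁻¹) := by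
    refine integral_mono_ae ((𝓕 f).integrable.norm.const_mul _) (i3.add (hi.const_mul _)) ?_
    filter_upwards [hae] with ξ hξ
    have hξ : 0 < ‖ξ‖ := norm_pos_iff.2 hξ
    apply amgm _ _ _ _ (by positivity) ht
    nlinarith [fourier_bound2 f ξ, mul_le_mul_of_nonneg_left (fourier_bound f ξ) (sq_nonneg R)]
  rw [integral_add i3 (hi.const_mul _), integral_const_mul, integral_const_mul,
    integral_add (i1.const_mul _) i2, integral_const_mul, integral_const_mul,
    integral_finsetSum _ (fun i _ => integrable_sq _),
    integral_finsetSum _ (fun i _ => integrable_finsetSum _ fun j _ => integrable_sq _)] at step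
  have e2 : ∀ i, ∫ ξ, ∑ j, ‖𝓕 (∂_{bas j} (∂_{bas i} f)) ξ‖ ^ 2
      = ∑ j, ∫ y, ‖∂_{bas j} (∂_{bas i} f) y‖ ^ 2 := by
    intro i
    rw [integral_finsetSum _ (fun j _ => integrable_sq _)]
    simp_rw [integral_norm_sq_fourier]
  simp_rw [e2, integral_norm_sq_fourier] at step
  have := inversion_bound f x
  have h4 : t⁻¹ * ∫ ξ : E3, (‖ξ‖ ^ 2 * (R ^ 2 + ‖ξ‖ ^ 2))⁻¹ ≤ t⁻¹ * (c / R) := by gcongr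
  linarith

lemma deriv_ofReal (u : SchwartzMap E3 ℝ) (m : E3) :
    ∂_{m} (u.postcompCLM Complex.ofRealCLM) = (∂_{m} u).postcompCLM Complex.ofRealCLM := by
  ext x
  rw [lineDerivOp_apply_eq_fderiv, postcompCLM_apply, lineDerivOp_apply_eq_fderiv]
  have h := Complex.ofRealCLM.hasFDerivAt.comp x (u.hasFDerivAt x)
  have h2 : HasFDerivAt (⇑(u.postcompCLM Complex.ofRealCLM))
    (Complex.ofRealCLM ∘L fderiv ℝ u x) x := h
  rw [h2.fderiv]
  rfl

lemma real_bound1 (u : SchwartzMap E3 ℝ) (i : Fin 3) :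
    ∫ y, ‖∂_{bas i} (u.postcompCLM Complex.ofRealCLM) y‖ ^ 2
      ≤ (eLpNorm (fun y => ‖fderiv ℝ (⇑u) y‖) 2 volume).toReal ^ 2 := by
  have h := eLpNorm_sq (fderivCLM ℝ E3 ℝ u)
  simp only [fderivCLM_apply] at h
  rw [← h]
  have h2 := integrable_sq (fderivCLM ℝ E3 ℝ u)
  simp only [fderivCLM_apply] at h2
  refine integral_mono (integrable_sq _) h2 fun y => ?_
  simp only [deriv_ofReal, postcompCLM_apply, lineDerivOp_apply_eq_fderiv]
  gcongr
  simpa [bas] using (fderiv ℝ u y).le_opNorm (bas i)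

lemma real_bound2 (u : SchwartzMap E3 ℝ) (i j : Fin 3) :
    ∫ y, ‖∂_{bas j} (∂_{bas i} (u.postcompCLM Complex.ofRealCLM)) y‖ ^ 2
      ≤ (eLpNorm (fun y => ‖iteratedFDeriv ℝ 2 (⇑u) y‖) 2 volume).toReal ^ 2 := by
  have hn : ∀ y, ‖iteratedFDeriv ℝ 2 (⇑u) y‖
      = ‖fderivCLM ℝ E3 _ (fderivCLM ℝ E3 ℝ u) y‖ := by
    intro y
    rw [← norm_iteratedFDeriv_fderiv, norm_iteratedFDeriv_one]
    rfl
  simp_rw [hn]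
  rw [← eLpNorm_sq]
  refine integral_mono (integrable_sq _) (integrable_sq _) fun y => ?_
  simp only [deriv_ofReal, postcompCLM_apply]
  rw [← hn]
  gcongr
  have h := iteratedLineDerivOp_eq_iteratedFDeriv (m := ![bas j, bas i]) (f := u) (x := y)
  have h' : ∂_{bas j} (∂_{bas i} u) y = iteratedFDeriv ℝ 2 u y ![bas j, bas i] := by
    rw [← h]
    simp [iteratedLineDerivOp_succ_left]
  rw [h']
  have := (iteratedFDeriv ℝ 2 u y).le_opNorm ![bas j, bas i]
  simpa [bas, Fin.prod_univ_two] using this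

lemma final (x A B c : ℝ) (hx : 0 ≤ x) (hA : 0 ≤ A) (hB : 0 ≤ B) (hc : 0 < c)
    (h : ∀ R t : ℝ, 0 < R → 0 < t →
      2 * x ≤ t * (R ^ 2 * (9 * A ^ 2) + 9 * B ^ 2) + t⁻¹ * (c / R)) :
    x ^ 2 ≤ (18 + c) ^ 2 * A * B := by
  have hε : ∀ ε : ℝ, 0 < ε → x ^ 2 ≤ (18 + c) ^ 2 * (A + ε) * (B + ε) := by
    intro ε he
    have ha : 0 < A + ε := by linarith
    have hb : 0 < B + ε := by linarith
    set a := A + ε with had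
    set b := B + ε with hbd
    set q := Real.sqrt (a * b) with hq
    have hq0 : 0 < q := Real.sqrt_pos.2 (by positivity)
    have hqq : q ^ 2 = a * b := Real.sq_sqrt (by positivity)
    have h1 := h (b / a) (a / (b * q)) (by positivity) (by positivity)
    have h2 : a / (b * q) * ((b / a) ^ 2 * (9 * A ^ 2) + 9 * B ^ 2)
        ≤ a / (b * q) * ((b / a) ^ 2 * (9 * a ^ 2) + 9 * b ^ 2) := by
      have : A ≤ a := by linarith
      have : B ≤ b := by linarith
      gcongr
    have h3 : a / (b * q) * ((b / a) ^ 2 * (9 * a ^ 2) + 9 * b ^ 2) = 18 * q := by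
      field_simp
      rw [hqq]
      ring
    have h4 : (a / (b * q))⁻¹ * (c / (b / a)) = c * q := by
      field_simp
    have h5 : x ≤ (18 + c) * q := by nlinarith
    calc x ^ 2 ≤ ((18 + c) * q) ^ 2 := by gcongr
      _ = _ := by rw [mul_pow, hqq]; ring
  have ht : Filter.Tendsto (fun ε : ℝ => (18 + c) ^ 2 * (A + ε) * (B + ε))
      (nhdsWithin 0 (Set.Ioi 0)) (nhds ((18 + c) ^ 2 * (A + 0) * (B + 0))) := by
    have : Continuous (fun ε : ℝ => (18 + c) ^ 2 * (A + ε) * (B + ε)) := by fun_prop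
    exact (this.tendsto 0).mono_left nhdsWithin_le_nhds
  rw [add_zero, add_zero] at ht
  exact ge_of_tendsto ht (by filter_upwards [self_mem_nhdsWithin] with ε he using hε ε he)

end GN

theorem stmt_4 :
    ∃ C : ℝ, 0 < C ∧
      ∀ u : SchwartzMap (EuclideanSpace ℝ (Fin 3)) ℝ, ∀ x,
        |u x| ^ 2 ≤
          C * (eLpNorm (fun y => ‖fderiv ℝ (⇑u) y‖) 2 volume).toReal *
            (eLpNorm (fun y => ‖iteratedFDeriv ℝ 2 (⇑u) y‖) 2 volume).toReal := by
  obtain ⟨c, hc0, hc⟩ := GN.radial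
  refine ⟨(18 + c) ^ 2, by positivity, fun u x => ?_⟩
  refine GN.final _ _ _ c (abs_nonneg _) ENNReal.toReal_nonneg ENNReal.toReal_nonneg hc0 ?_
  intro R t hR ht
  have h := GN.complex_bound c hc (u.postcompCLM Complex.ofRealCLM) x R t hR ht
  have hx : ‖u.postcompCLM Complex.ofRealCLM x‖ = |u x| := by
    simp [SchwartzMap.postcompCLM_apply]
  rw [hx] at h
  refine h.trans ?_
  have s1 := Finset.sum_le_sum (s := Finset.univ) fun i _ => GN.real_bound1 u i
  have s2 := Finset.sum_le_sum (s := Finset.univ) fun i _ =>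
    Finset.sum_le_sum (s := Finset.univ) fun j _ => GN.real_bound2 u i j
  simp only [Finset.sum_const, Finset.card_univ, Fintype.card_fin, nsmul_eq_mul] at s1 s2
  push_cast at s1 s2
  gcongr
  · refine s1.trans ?_
    gcongr
    norm_num
  · refine s2.trans (le_of_eq ?_)
    ring
end

section
/- (Interpolation with negative Besov regularity) There exists a constant C > 0 such that for all z in the Schwartz space on ℝ³, ‖z‖_{L²(ℝ³)} ≤ C·‖∇z‖_{L²(ℝ³)}^{3/5}·‖z‖_{Ḃ^{−3/2}_{2,∞}}^{2/5}, where ‖z‖_{Ḃ^{−3/2}_{2,∞}} := sup_{t>0} t^{3/4}·‖e^{tΔ}z‖_{L²(ℝ³)}. -/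
open MeasureTheory Real

noncomputable def heatSemigroup (t : ℝ) (z : EuclideanSpace ℝ (Fin 3) → ℝ)
    (x : EuclideanSpace ℝ (Fin 3)) : ℝ :=
  ∫ y, (4 * π * t) ^ (-(3:ℝ)/2) * Real.exp (-‖x - y‖ ^ 2 / (4 * t)) * z y

theorem aux_jensen {α : Type*} [MeasurableSpace α] (μ : Measure α) (hμ : μ Set.univ = 1)
    (f : α → ENNReal) (hf : AEMeasurable f μ) :
    (∫⁻ a, f a ∂μ) ^ 2 ≤ ∫⁻ a, f a ^ 2 ∂μ := by
  have h := ENNReal.lintegral_mul_le_Lp_mul_Lq μ (p := 2) (q := 2)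
    (Real.HolderConjugate.two_two) hf (aemeasurable_const (b := (1 : ENNReal)))
  simp only [Pi.mul_apply, mul_one, lintegral_const, hμ, ENNReal.rpow_two, one_pow, ENNReal.one_rpow] at h
  calc (∫⁻ a, f a ∂μ) ^ 2 ≤ ((∫⁻ a, f a ^ 2 ∂μ) ^ ((1:ℝ)/2)) ^ 2 := by gcongr
    _ = _ := by
      rw [← ENNReal.rpow_natCast, ← ENNReal.rpow_mul]
      norm_num

theorem aux_diff (z : SchwartzMap (EuclideanSpace ℝ (Fin 3)) ℝ) (x y : (EuclideanSpace ℝ (Fin 3))) :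
    ‖z x - z (x - y)‖ₑ ^ 2 ≤
      ∫⁻ s in Set.Ioc (0:ℝ) 1, (‖fderiv ℝ z (x - s • y)‖ₑ * ‖y‖ₑ) ^ 2 := by
  have hc : Continuous (fderiv ℝ z) := (z.smooth 1).continuous_fderiv (by norm_num)
  have hd : ∀ s : ℝ, HasDerivAt (fun s : ℝ => z (x - s • y)) (fderiv ℝ z (x - s • y) (-y)) s := by
    intro s
    have h1 : HasDerivAt (fun s : ℝ => x - s • y) (-y) s := by
      have := ((hasDerivAt_id s).smul_const y).const_sub x
      simpa using this
    exact (z.differentiableAt.hasFDerivAt).comp_hasDerivAt s h1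
  have hcont : Continuous (fun s : ℝ => fderiv ℝ z (x - s • y) (-y)) := by fun_prop
  have h := intervalIntegral.integral_eq_sub_of_hasDerivAt (a := 0) (b := 1)
    (fun s _ => hd s) (hcont.intervalIntegrable _ _)
  simp only [one_smul, zero_smul, sub_zero] at h
  have h2 : ‖z x - z (x - y)‖ₑ ≤ ∫⁻ s in Set.Ioc (0:ℝ) 1, ‖fderiv ℝ z (x - s • y)‖ₑ * ‖y‖ₑ := by
    rw [← enorm_neg, neg_sub, ← h, intervalIntegral.integral_of_le zero_le_one]
    refine (enorm_integral_le_lintegral_enorm _).trans (lintegral_mono fun s => ?_)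
    have := (fderiv ℝ z (x - s • y)).le_opENorm (-y)
    simpa using this
  calc _ ≤ (∫⁻ s in Set.Ioc (0:ℝ) 1, ‖fderiv ℝ z (x - s • y)‖ₑ * ‖y‖ₑ) ^ 2 := by gcongr
    _ ≤ _ := aux_jensen _ (by simp) _ (by fun_prop)

theorem aux_trans (z : SchwartzMap (EuclideanSpace ℝ (Fin 3)) ℝ) (y : (EuclideanSpace ℝ (Fin 3))) :
    ∫⁻ x, ‖z x - z (x - y)‖ₑ ^ 2 ≤ ‖y‖ₑ ^ 2 * ∫⁻ x, ‖fderiv ℝ z x‖ₑ ^ 2 := by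
  have hc : Continuous (fderiv ℝ z) := (z.smooth 1).continuous_fderiv (by norm_num)
  calc _ ≤ ∫⁻ x, ∫⁻ s in Set.Ioc (0:ℝ) 1, (‖fderiv ℝ z (x - s • y)‖ₑ * ‖y‖ₑ) ^ 2 :=
        lintegral_mono fun x => aux_diff z x y
    _ = ∫⁻ s in Set.Ioc (0:ℝ) 1, ∫⁻ x, (‖fderiv ℝ z (x - s • y)‖ₑ * ‖y‖ₑ) ^ 2 := by
        apply lintegral_lintegral_swap
        apply Measurable.aemeasurable
        have : Measurable (fun p : (EuclideanSpace ℝ (Fin 3)) × ℝ => fderiv ℝ z (p.1 - p.2 • y)) :=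
          (by fun_prop : Continuous _).measurable
        exact (this.enorm.mul_const _).pow_const 2
    _ = ∫⁻ s in Set.Ioc (0:ℝ) 1, ‖y‖ₑ ^ 2 * ∫⁻ x, ‖fderiv ℝ z x‖ₑ ^ 2 := by
        congr 1
        ext s
        rw [lintegral_sub_right_eq_self (fun x => (‖fderiv ℝ z x‖ₑ * ‖y‖ₑ) ^ 2) (s • y)]
        simp_rw [mul_pow]
        rw [lintegral_mul_const' _ _ (by simp), mul_comm]
    _ = _ := by simp

noncomputable def gK (t : ℝ) (y : (EuclideanSpace ℝ (Fin 3))) : ℝ :=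
  (4 * π * t) ^ (-(3:ℝ)/2) * Real.exp (-‖y‖ ^ 2 / (4 * t))

theorem gK_cont (t : ℝ) : Continuous (gK t) := by unfold gK; fun_prop

theorem gK_nonneg {t : ℝ} (ht : 0 < t) (y : (EuclideanSpace ℝ (Fin 3))) : 0 ≤ gK t y := by unfold gK; positivity

theorem gauss_int {b : ℝ} (hb : 0 < b) : Integrable (fun y : (EuclideanSpace ℝ (Fin 3)) => Real.exp (-b * ‖y‖ ^ 2)) := by
  have h := GaussianFourier.integral_rexp_neg_mul_sq_norm (V := (EuclideanSpace ℝ (Fin 3))) hb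
  by_contra hn
  rw [integral_undef hn] at h
  have : 0 < (π / b) ^ ((Module.finrank ℝ (EuclideanSpace ℝ (Fin 3)) : ℝ) / 2) := by positivity
  linarith

theorem gK_eq (t : ℝ) : gK t = fun y => (4 * π * t) ^ (-(3:ℝ)/2) *
    Real.exp (-(1 / (4 * t)) * ‖y‖ ^ 2) := by
  ext y; unfold gK; congr 2; ring

theorem gK_integrable {t : ℝ} (ht : 0 < t) : Integrable (gK t) := by
  rw [gK_eq]; exact (gauss_int (by positivity)).const_mul _

theorem gK_integral {t : ℝ} (ht : 0 < t) : ∫ y, gK t y = 1 := by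
  rw [gK_eq, integral_const_mul, GaussianFourier.integral_rexp_neg_mul_sq_norm (by positivity)]
  have : π / (1 / (4 * t)) = 4 * π * t := by field_simp
  rw [this, ← Real.rpow_add (by positivity)]
  simp
  norm_num

theorem gK_lint {t : ℝ} (ht : 0 < t) : ∫⁻ y, ENNReal.ofReal (gK t y) = 1 := by
  rw [← ofReal_integral_eq_lintegral_ofReal (gK_integrable ht)
    (Filter.Eventually.of_forall (gK_nonneg ht)), gK_integral ht]
  simp

theorem gK_moment_pt {t : ℝ} (ht : 0 < t) (y : (EuclideanSpace ℝ (Fin 3))) :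
    gK t y * ‖y‖ ^ 2 ≤ 8 * t * 2 ^ ((3:ℝ)/2) * gK (2 * t) y := by
  unfold gK
  have h1 : (4 * π * (2 * t)) ^ (-(3:ℝ)/2) = 2 ^ (-(3:ℝ)/2) * (4 * π * t) ^ (-(3:ℝ)/2) := by
    rw [← Real.mul_rpow (by norm_num) (by positivity)]; congr 1; ring
  have h2 : (2:ℝ) ^ ((3:ℝ)/2) * 2 ^ (-(3:ℝ)/2) = 1 := by
    rw [← Real.rpow_add (by norm_num)]; norm_num
  have h3 : Real.exp (-‖y‖ ^ 2 / (4 * t)) * ‖y‖ ^ 2 ≤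
      8 * t * Real.exp (-‖y‖ ^ 2 / (4 * (2 * t))) := by
    set u := ‖y‖ ^ 2 / (8 * t) with hu
    have e1 : -‖y‖ ^ 2 / (4 * t) = -u + -u := by rw [hu]; field_simp; ring
    have e2 : -‖y‖ ^ 2 / (4 * (2 * t)) = -u := by rw [hu]; field_simp; ring
    have e3 : ‖y‖ ^ 2 = 8 * t * u := by rw [hu]; field_simp
    rw [e1, e2, e3, Real.exp_add]
    have h4 : u * Real.exp (-u) ≤ 1 := by
      rw [Real.exp_neg, ← div_eq_mul_inv, div_le_one (Real.exp_pos u)]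
      linarith [Real.add_one_le_exp u]
    have h5 : 0 ≤ 8 * t * Real.exp (-u) := by positivity
    nlinarith
  rw [h1]
  calc _ = (4 * π * t) ^ (-(3:ℝ)/2) * (Real.exp (-‖y‖ ^ 2 / (4 * t)) * ‖y‖ ^ 2) := by ring
    _ ≤ (4 * π * t) ^ (-(3:ℝ)/2) * (8 * t * Real.exp (-‖y‖ ^ 2 / (4 * (2 * t)))) := by gcongr
    _ = ((2:ℝ) ^ ((3:ℝ)/2) * 2 ^ (-(3:ℝ)/2)) *
      ((4 * π * t) ^ (-(3:ℝ)/2) * (8 * t * Real.exp (-‖y‖ ^ 2 / (4 * (2 * t))))) := by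
        rw [h2, one_mul]
    _ = _ := by ring

theorem gK_moment {t : ℝ} (ht : 0 < t) :
    ∫⁻ y, ENNReal.ofReal (gK t y) * ‖y‖ₑ ^ 2 ≤ ENNReal.ofReal (8 * t * 2 ^ ((3:ℝ)/2)) := by
  calc _ ≤ ∫⁻ y, ENNReal.ofReal (8 * t * 2 ^ ((3:ℝ)/2)) * ENNReal.ofReal (gK (2 * t) y) := by
        refine lintegral_mono fun y => ?_
        rw [← ofReal_norm, ← ENNReal.ofReal_pow (norm_nonneg _),
          ← ENNReal.ofReal_mul (gK_nonneg ht y), ← ENNReal.ofReal_mul (by positivity)]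
        exact ENNReal.ofReal_le_ofReal (gK_moment_pt ht y)
    _ = _ := by
        rw [lintegral_const_mul' _ _ ENNReal.ofReal_ne_top, gK_lint (by positivity), mul_one]

theorem heat_eq (t : ℝ) (z : (EuclideanSpace ℝ (Fin 3)) → ℝ) (x : (EuclideanSpace ℝ (Fin 3))) :
    heatSemigroup t z x = ∫ y, gK t y * z (x - y) := by
  rw [← integral_sub_left_eq_self (fun y => gK t y * z (x - y)) volume x]
  simp [heatSemigroup, gK]

theorem heat_int {t : ℝ} (ht : 0 < t) (z : SchwartzMap (EuclideanSpace ℝ (Fin 3)) ℝ) (x : (EuclideanSpace ℝ (Fin 3))) :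
    Integrable (fun y => gK t y * z (x - y)) := by
  obtain ⟨C, hC⟩ : ∃ C, ∀ y, ‖z y‖ ≤ C :=
    ⟨_, fun y => z.toBoundedContinuousFunction.norm_coe_le_norm y⟩
  refine (gK_integrable ht).mul_bdd (c := C) ?_ (Filter.Eventually.of_forall fun y => hC _)
  exact (z.continuous.comp (by fun_prop)).aestronglyMeasurable

theorem heat_diff_pt {t : ℝ} (ht : 0 < t) (z : SchwartzMap (EuclideanSpace ℝ (Fin 3)) ℝ) (x : (EuclideanSpace ℝ (Fin 3))) :
    ‖z x - heatSemigroup t z x‖ₑ ^ 2 ≤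
      ∫⁻ y, ENNReal.ofReal (gK t y) * ‖z x - z (x - y)‖ₑ ^ 2 := by
  have hzc := z.continuous
  have hm : Measurable (fun y => ENNReal.ofReal (gK t y)) :=
    (gK_cont t).measurable.ennreal_ofReal
  have hm2 : Measurable (fun y => ‖z x - z (x - y)‖ₑ) :=
    (by fun_prop : Continuous (fun y => z x - z (x - y))).measurable.enorm
  have e : z x - heatSemigroup t z x = ∫ y, gK t y * (z x - z (x - y)) := by
    simp_rw [mul_sub]
    rw [integral_sub ((gK_integrable ht).mul_const _) (heat_int ht z x), integral_mul_const,
      gK_integral ht, heat_eq, one_mul]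
  set μ := (volume : Measure (EuclideanSpace ℝ (Fin 3))).withDensity (fun y => ENNReal.ofReal (gK t y)) with hμ
  have h1 : ‖z x - heatSemigroup t z x‖ₑ ≤ ∫⁻ y, ‖z x - z (x - y)‖ₑ ∂μ := by
    rw [e, hμ, lintegral_withDensity_eq_lintegral_mul _ hm hm2]
    refine (enorm_integral_le_lintegral_enorm _).trans (lintegral_mono fun y => ?_)
    rw [enorm_mul, Real.enorm_of_nonneg (gK_nonneg ht y)]
    rfl
  calc _ ≤ (∫⁻ y, ‖z x - z (x - y)‖ₑ ∂μ) ^ 2 := by gcongr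
    _ ≤ ∫⁻ y, ‖z x - z (x - y)‖ₑ ^ 2 ∂μ :=
      aux_jensen μ (by rw [hμ, withDensity_apply _ MeasurableSet.univ]; simpa using gK_lint ht)
        _ hm2.aemeasurable
    _ = _ := by
      rw [hμ, lintegral_withDensity_eq_lintegral_mul _ hm (hm2.pow_const 2)]
      rfl

theorem heat_diff {t : ℝ} (ht : 0 < t) (z : SchwartzMap (EuclideanSpace ℝ (Fin 3)) ℝ) :
    ∫⁻ x, ‖z x - heatSemigroup t z x‖ₑ ^ 2 ≤
      ENNReal.ofReal (8 * t * 2 ^ ((3:ℝ)/2)) * ∫⁻ x, ‖fderiv ℝ z x‖ₑ ^ 2 := by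
  have hzc := z.continuous
  have hg := gK_cont t
  calc _ ≤ ∫⁻ x, ∫⁻ y, ENNReal.ofReal (gK t y) * ‖z x - z (x - y)‖ₑ ^ 2 :=
        lintegral_mono fun x => heat_diff_pt ht z x
    _ = ∫⁻ y, ∫⁻ x, ENNReal.ofReal (gK t y) * ‖z x - z (x - y)‖ₑ ^ 2 := by
        apply lintegral_lintegral_swap
        apply Measurable.aemeasurable
        have h1 : Measurable (fun p : (EuclideanSpace ℝ (Fin 3)) × (EuclideanSpace ℝ (Fin 3)) => z p.1 - z (p.1 - p.2)) :=
          (by fun_prop : Continuous _).measurable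
        have h2 : Measurable (fun p : (EuclideanSpace ℝ (Fin 3)) × (EuclideanSpace ℝ (Fin 3)) => gK t p.2) :=
          (by fun_prop : Continuous _).measurable
        exact h2.ennreal_ofReal.mul (h1.enorm.pow_const 2)
    _ ≤ ∫⁻ y, (ENNReal.ofReal (gK t y) * ‖y‖ₑ ^ 2) * ∫⁻ x, ‖fderiv ℝ z x‖ₑ ^ 2 := by
        refine lintegral_mono fun y => ?_
        rw [lintegral_const_mul' _ _ ENNReal.ofReal_ne_top, mul_assoc]
        gcongr
        exact aux_trans z y
    _ = (∫⁻ y, ENNReal.ofReal (gK t y) * ‖y‖ₑ ^ 2) * ∫⁻ x, ‖fderiv ℝ z x‖ₑ ^ 2 := by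
        apply lintegral_mul_const
        exact hg.measurable.ennreal_ofReal.mul (measurable_enorm.pow_const 2)
    _ ≤ _ := by gcongr; exact gK_moment ht

theorem eL2 {F : Type*} [NormedAddCommGroup F] (f : (EuclideanSpace ℝ (Fin 3)) → F) :
    eLpNorm f 2 volume = (∫⁻ x, ‖f x‖ₑ ^ 2) ^ ((1:ℝ)/2) := by
  rw [eLpNorm_eq_lintegral_rpow_enorm_toReal (by norm_num) (by norm_num)]
  simp

theorem heat_meas (t : ℝ) (z : SchwartzMap (EuclideanSpace ℝ (Fin 3)) ℝ) :
    AEStronglyMeasurable (heatSemigroup t z) volume := by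
  have hzc := z.continuous
  have hg := gK_cont t
  have : heatSemigroup t z = fun x => ∫ y, gK t y * z (x - y) := by
    ext x; exact heat_eq t z x
  rw [this]
  have h : StronglyMeasurable (fun p : (EuclideanSpace ℝ (Fin 3)) × (EuclideanSpace ℝ (Fin 3)) => gK t p.2 * z (p.1 - p.2)) :=
    (by fun_prop : Continuous _).stronglyMeasurable
  exact h.integral_prod_right.aestronglyMeasurable

theorem fderiv_fin (z : SchwartzMap (EuclideanSpace ℝ (Fin 3)) ℝ) : MemLp (fderiv ℝ z) 2 volume :=
  (SchwartzMap.fderivCLM ℝ (EuclideanSpace ℝ (Fin 3)) ℝ z).memLp 2 volume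

theorem key {t : ℝ} (ht : 0 < t) (z : SchwartzMap (EuclideanSpace ℝ (Fin 3)) ℝ) :
    (eLpNorm z 2 volume).toReal ≤ (eLpNorm (heatSemigroup t z) 2 volume).toReal +
      (8 * t * 2 ^ ((3:ℝ)/2)) ^ ((1:ℝ)/2) *
        (eLpNorm (fun y => ‖fderiv ℝ z y‖) 2 volume).toReal := by
  rw [eLpNorm_norm]
  have hD := (fderiv_fin z).2
  have hz := (z.memLp 2 volume)
  have hd : eLpNorm (⇑z - heatSemigroup t z) 2 volume ≤
      ENNReal.ofReal ((8 * t * 2 ^ ((3:ℝ)/2)) ^ ((1:ℝ)/2)) * eLpNorm (fderiv ℝ z) 2 volume := by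
    rw [eL2, eL2, ← ENNReal.ofReal_rpow_of_nonneg (by positivity) (by norm_num),
      ← ENNReal.mul_rpow_of_nonneg _ _ (by norm_num)]
    exact ENNReal.rpow_le_rpow (heat_diff ht z) (by norm_num)
  have hdf : eLpNorm (⇑z - heatSemigroup t z) 2 volume < ⊤ :=
    hd.trans_lt (ENNReal.mul_lt_top ENNReal.ofReal_lt_top hD)
  have hdm : MemLp (⇑z - heatSemigroup t z) 2 volume := ⟨hz.1.sub (heat_meas t z), hdf⟩
  have hh : MemLp (heatSemigroup t z) 2 volume := by
    have := hz.sub hdm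
    simpa using this
  have htri : eLpNorm z 2 volume ≤ eLpNorm (heatSemigroup t z) 2 volume +
      eLpNorm (⇑z - heatSemigroup t z) 2 volume := by
    have := eLpNorm_add_le hh.1 hdm.1 (p := 2) (by norm_num)
    simpa using this
  have h1 := ENNReal.toReal_mono (ENNReal.add_ne_top.2 ⟨hh.2.ne, hdf.ne⟩) htri
  rw [ENNReal.toReal_add hh.2.ne hdf.ne] at h1
  have h2 := ENNReal.toReal_mono (ENNReal.mul_lt_top ENNReal.ofReal_lt_top hD).ne hd
  rw [ENNReal.toReal_mul, ENNReal.toReal_ofReal (by positivity)] at h2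
  linarith

theorem opt {N D M K : ℝ} (hD : 0 ≤ D) (hM : 0 ≤ M) (hK : 0 ≤ K)
    (h : ∀ t : ℝ, 0 < t → N ≤ t ^ (-(3:ℝ)/4) * M + K * t ^ ((1:ℝ)/2) * D) :
    N ≤ (1 + K) * D ^ ((3:ℝ)/5) * M ^ ((2:ℝ)/5) := by
  have hpos : ∀ ε : ℝ, 0 < ε → N ≤ (1 + K) * (D + ε) ^ ((3:ℝ)/5) * (M + ε) ^ ((2:ℝ)/5) := by
    intro ε hε
    have hd : 0 < D + ε := by linarith
    have hm : 0 < M + ε := by linarith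
    set d := D + ε with hdd
    set m := M + ε with hmm
    have ht : 0 < (m / d) ^ ((4:ℝ)/5) := by positivity
    have h0 := h _ ht
    have e1 : ((m / d) ^ ((4:ℝ)/5)) ^ (-(3:ℝ)/4) * m = d ^ ((3:ℝ)/5) * m ^ ((2:ℝ)/5) := by
      rw [← Real.rpow_mul (by positivity), Real.div_rpow hm.le hd.le]
      norm_num
      rw [Real.rpow_neg hm.le, Real.rpow_neg hd.le]
      have : m = m ^ ((3:ℝ)/5) * m ^ ((2:ℝ)/5) := by
        rw [← Real.rpow_add hm]; norm_num
      nth_rw 2 [this]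
      field_simp
    have e2 : ((m / d) ^ ((4:ℝ)/5)) ^ ((1:ℝ)/2) * d = d ^ ((3:ℝ)/5) * m ^ ((2:ℝ)/5) := by
      rw [← Real.rpow_mul (by positivity), Real.div_rpow hm.le hd.le]
      norm_num
      have : d = d ^ ((3:ℝ)/5) * d ^ ((2:ℝ)/5) := by
        rw [← Real.rpow_add hd]; norm_num
      nth_rw 2 [this]
      field_simp
    calc N ≤ _ := h0
      _ ≤ ((m / d) ^ ((4:ℝ)/5)) ^ (-(3:ℝ)/4) * m + K * ((m / d) ^ ((4:ℝ)/5)) ^ ((1:ℝ)/2) * d := by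
        gcongr <;> linarith
      _ = _ := by rw [e1, mul_assoc K, e2]; ring
  have hc : Continuous (fun ε : ℝ => (1 + K) * (D + ε) ^ ((3:ℝ)/5) * (M + ε) ^ ((2:ℝ)/5)) := by
    have h1 : Continuous (fun ε : ℝ => (D + ε) ^ ((3:ℝ)/5)) :=
      (by fun_prop : Continuous (fun ε : ℝ => D + ε)).rpow_const (fun _ => Or.inr (by norm_num))
    have h2 : Continuous (fun ε : ℝ => (M + ε) ^ ((2:ℝ)/5)) :=
      (by fun_prop : Continuous (fun ε : ℝ => M + ε)).rpow_const (fun _ => Or.inr (by norm_num))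
    exact (continuous_const.mul h1).mul h2
  have hl := (hc.tendsto 0).mono_left (nhdsWithin_le_nhds (s := Set.Ioi 0))
  simp only [add_zero] at hl
  exact ge_of_tendsto hl (eventually_nhdsWithin_of_forall fun ε hε => hpos ε hε)

theorem stmt_5 :
    ∃ C : ℝ, 0 < C ∧
      ∀ z : SchwartzMap (EuclideanSpace ℝ (Fin 3)) ℝ, ∀ M : ℝ,
        (∀ t : ℝ, 0 < t →
          t ^ ((3:ℝ)/4) * (eLpNorm (heatSemigroup t ⇑z) 2 volume).toReal ≤ M) →
        (eLpNorm (⇑z) 2 volume).toReal ≤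
          C * (eLpNorm (fun y => ‖fderiv ℝ (⇑z) y‖) 2 volume).toReal ^ ((3:ℝ)/5) *
            M ^ ((2:ℝ)/5) := by
  refine ⟨1 + (8 * 2 ^ ((3:ℝ)/2)) ^ ((1:ℝ)/2), by positivity, fun z M hM => ?_⟩
  have hM0 : 0 ≤ M := le_trans (by positivity) (hM 1 one_pos)
  refine opt ENNReal.toReal_nonneg hM0 (by positivity) fun t ht => ?_
  refine (key ht z).trans ?_
  have e : (8 * t * 2 ^ ((3:ℝ)/2)) ^ ((1:ℝ)/2) =
      (8 * 2 ^ ((3:ℝ)/2)) ^ ((1:ℝ)/2) * t ^ ((1:ℝ)/2) := by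
    rw [← Real.mul_rpow (by positivity) ht.le]; congr 1; ring
  rw [e]
  gcongr
  have h1 : t ^ (-(3:ℝ)/4) * t ^ ((3:ℝ)/4) = 1 := by
    rw [← Real.rpow_add ht]; norm_num
  calc (eLpNorm (heatSemigroup t z) 2 volume).toReal
      = t ^ (-(3:ℝ)/4) * (t ^ ((3:ℝ)/4) * (eLpNorm (heatSemigroup t z) 2 volume).toReal) := by
        rw [← mul_assoc, h1, one_mul]
    _ ≤ _ := by gcongr; exact hM t ht
end
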